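/- Let δ > 0 be sufficiently small, let ζ, φ ∈ X_δ, let ρ₀ be a bounded measurable axisymmetric function on ℝ³, even in x₃, supported in B̄₁, and let k ∈ C²(ℝ). Then the function F₃(ζ,φ)(x) = L⁻¹[ (ρ₀ ∘ g_ζ⁻¹) · (k ∘ φ ∘ g_ζ⁻¹) ](g_ζ(x)), x ∈ B̄₁, belongs to X, and there is a constant C > 0 depending only on ‖ρ₀‖_{L∞}, k and δ such that ‖F₃(ζ,φ)‖_X ≤ C. -/

import Mathlib

noncomputable section

open MeasureTheory Metric Set Filter

/-- ℝ³ with the Euclidean norm. -/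
abbrev E3 := EuclideanSpace ℝ (Fin 3)
/-- ℝ⁵ with the Euclidean norm. -/
abbrev E5 := EuclideanSpace ℝ (Fin 5)

/-- Build a vector of ℝ³ from its coordinates. -/
def mk3 (a b c : ℝ) : E3 := (WithLp.equiv 2 (Fin 3 → ℝ)).symm ![a, b, c]
/-- Build a vector of ℝ⁵ from its coordinates. -/
def mk5 (a b c d e : ℝ) : E5 := (WithLp.equiv 2 (Fin 5 → ℝ)).symm ![a, b, c, d, e]

/-- The cylindrical radius r = √(x₁² + x₂²). -/
def cylRad (x : E3) : ℝ := Real.sqrt ((x 0)^2 + (x 1)^2)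

/-- The reflection (x₁, x₂, x₃) ↦ (x₁, x₂, −x₃). -/
def reflect3 (x : E3) : E3 := mk3 (x 0) (x 1) (-(x 2))

/-- Axisymmetric: a function of (r, x₃) only. -/
def Axisym (f : E3 → ℝ) : Prop := ∃ F : ℝ → ℝ → ℝ, ∀ x, f x = F (cylRad x) (x 2)

/-- Even in x₃. -/
def EvenZ (f : E3 → ℝ) : Prop := ∀ x, f (reflect3 x) = f x

/-- Five-dimensional extension of an axisymmetric function on ℝ³. -/
def tilde (f : E3 → ℝ) (y : E5) : ℝ :=
  f (mk3 (Real.sqrt ((y 0)^2 + (y 1)^2 + (y 2)^2 + (y 3)^2)) 0 (y 4))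

/-- The embedding (x₁,x₂,x₃) ↦ (x₁,x₂,0,0,x₃) of ℝ³ into ℝ⁵. -/
def emb (x : E3) : E5 := mk5 (x 0) (x 1) 0 0 (x 2)

/-- The operator L⁻¹, given by
(L⁻¹f)(x) = C₅ (x₁²+x₂²) ∫_{ℝ⁵} |(x₁,x₂,0,0,x₃) − y|⁻³ f̃(y) dy. -/
def Linv (C₅ : ℝ) (f : E3 → ℝ) (x : E3) : ℝ :=
  C₅ * ((x 0)^2 + (x 1)^2) * ∫ y : E5, (‖emb x - y‖ ^ 3)⁻¹ * tilde f y

/-- The gradient of a function on the closed unit ball B̄₁ ⊂ ℝ³. -/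
def gradB (f : E3 → ℝ) (x : E3) : E3 →L[ℝ] ℝ :=
  fderivWithin ℝ f (closedBall (0:E3) 1) x

/-- Membership in the space X: C¹ on B̄₁, axisymmetric, even in x₃, vanishing at the
origin, and with finite norm ‖f‖_X = sup_{0<|x|≤1} |∇f(x)|/|x|. -/
def InX (f : E3 → ℝ) : Prop :=
  ContDiffOn ℝ 1 f (closedBall (0:E3) 1) ∧
  (∃ F : ℝ → ℝ → ℝ, ∀ x ∈ closedBall (0:E3) 1, f x = F (cylRad x) (x 2)) ∧
  (∀ x ∈ closedBall (0:E3) 1, f (reflect3 x) = f x) ∧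
  f 0 = 0 ∧
  (∃ M : ℝ, ∀ x ∈ closedBall (0:E3) 1, ‖gradB f x‖ ≤ M * ‖x‖)

/-- ‖f‖_X ≤ M, expressed pointwise: |∇f(x)| ≤ M|x| on B̄₁. -/
def XnormLe (f : E3 → ℝ) (M : ℝ) : Prop :=
  ∀ x ∈ closedBall (0:E3) 1, ‖gradB f x‖ ≤ M * ‖x‖

/-- Membership in X_δ, for a function extended to all of ℝ³ preserving axisymmetry,
evenness in x₃ and the X-bound ‖∇ζ(x)‖ ≤ δ|x|. -/
def InXext (δ : ℝ) (ζ : E3 → ℝ) : Prop :=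
  ContDiff ℝ 1 ζ ∧ Axisym ζ ∧ EvenZ ζ ∧ ζ 0 = 0 ∧ ∀ x : E3, ‖fderiv ℝ ζ x‖ ≤ δ * ‖x‖

/-- The deformation g_ζ(x) = x (1 + ζ(x)/|x|²). -/
def gdef (ζ : E3 → ℝ) (x : E3) : E3 := (1 + ζ x / ‖x‖^2) • x

/-- The inverse deformation g_ζ⁻¹. -/
def ginv (ζ : E3 → ℝ) : E3 → E3 := Function.invFun (gdef ζ)


theorem ptl_int {F : Type*} [NormedAddCommGroup F] [NormedSpace ℝ F]
    {H : E5 → ℝ} {A R : ℝ} (hm : AEStronglyMeasurable H volume)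
    (hA : ∀ y, |H y| ≤ A) (hs : ∀ y, 2 < ‖y‖ → H y = 0)
    {k : E5 → F} (hk : IntegrableOn k (closedBall 0 (R+2))) {w : E5} (hw : ‖w‖ ≤ R) :
    Integrable (fun y => H y • k (w - y)) ∧
    ‖∫ y, H y • k (w - y)‖ ≤ A * ∫ u in closedBall (0:E5) (R+2), ‖k u‖ := by
  have hk' : Integrable (indicator (closedBall (0:E5) (R+2)) k) :=
    (integrable_indicator_iff measurableSet_closedBall).2 hk
  have e : (fun y => H y • k (w - y)) =
      fun y => H y • (indicator (closedBall (0:E5) (R+2)) k) (w - y) := by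
    funext y
    by_cases h : 2 < ‖y‖
    · simp [hs y h]
    · congr 1
      rw [indicator_of_mem]
      rw [mem_closedBall_zero_iff]
      have := norm_sub_le w y
      linarith
  have hc := hk'.comp_sub_left w
  rw [e]
  refine ⟨hc.bdd_smul A hm (Eventually.of_forall fun y => by simpa using hA y), ?_⟩
  have h2 : ∫ u in closedBall (0:E5) (R+2), ‖k u‖ =
      ∫ y, ‖(indicator (closedBall (0:E5) (R+2)) k) (w - y)‖ := by
    rw [integral_sub_left_eq_self (fun u => ‖(indicator (closedBall (0:E5) (R+2)) k) u‖),
      ← integral_indicator measurableSet_closedBall]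
    congr 1
    funext u
    rw [norm_indicator_eq_indicator_norm]
  rw [h2, ← integral_const_mul]
  refine norm_integral_le_of_norm_le (hc.norm.const_mul A) (Eventually.of_forall fun y => ?_)
  rw [norm_smul]
  exact mul_le_mul_of_nonneg_right (by simpa using hA y) (norm_nonneg _)

theorem ptl_unif {F : Type*} [NormedAddCommGroup F] [NormedSpace ℝ F]
    {H : E5 → ℝ} {A R : ℝ} (hm : AEStronglyMeasurable H volume)
    (hA : ∀ y, |H y| ≤ A) (hs : ∀ y, 2 < ‖y‖ → H y = 0)
    {k : ℕ → E5 → F} {k0 : E5 → F} {B : E5 → ℝ}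
    (hB : IntegrableOn B (closedBall 0 (R+2)))
    (hkm : ∀ n, StronglyMeasurable (k n)) (hk0m : StronglyMeasurable k0)
    (hkB : ∀ n u, u ≠ 0 → ‖k n u‖ ≤ B u) (hk0B : ∀ u, u ≠ 0 → ‖k0 u‖ ≤ B u)
    (hl : ∀ u, u ≠ 0 → Tendsto (fun n => k n u) atTop (nhds (k0 u))) :
    TendstoUniformlyOn (fun n w => ∫ y, H y • k n (w - y)) (fun w => ∫ y, H y • k0 (w - y))
      atTop (ball 0 R) := by
  have ae0 : ∀ᵐ u : E5 ∂(volume.restrict (closedBall (0:E5) (R+2))), u ≠ 0 :=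
    ae_restrict_of_ae (by simp [ae_iff])
  have i0 : IntegrableOn k0 (closedBall 0 (R+2)) :=
    hB.mono' hk0m.aestronglyMeasurable (ae0.mono fun u hu => hk0B u hu)
  have i1 : ∀ n, IntegrableOn (k n) (closedBall 0 (R+2)) := fun n =>
    hB.mono' (hkm n).aestronglyMeasurable (ae0.mono fun u hu => hkB n u hu)
  have T : Tendsto (fun n => A * ∫ u in closedBall (0:E5) (R+2), ‖k0 u - k n u‖) atTop
      (nhds 0) := by
    have : Tendsto (fun n => ∫ u in closedBall (0:E5) (R+2), ‖k0 u - k n u‖) atTop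
        (nhds (∫ u in closedBall (0:E5) (R+2), (0:ℝ))) := by
      refine tendsto_integral_of_dominated_convergence (fun u => 2 * B u)
        (fun n => (hk0m.sub (hkm n)).norm.aestronglyMeasurable) (hB.const_mul 2) ?_ ?_
      · intro n
        filter_upwards [ae0] with u hu
        rw [norm_norm]
        have := norm_sub_le (k0 u) (k n u)
        have := hkB n u hu
        have := hk0B u hu
        linarith
      · filter_upwards [ae0] with u hu
        have := ((tendsto_const_nhds (x := k0 u)).sub (hl u hu)).norm
        simpa using this
    have := this.const_mul A
    simpa using this
  rw [Metric.tendstoUniformlyOn_iff]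
  intro ε hε
  filter_upwards [T.eventually (gt_mem_nhds hε)] with n hn w hw
  have hw' : ‖w‖ ≤ R := (mem_ball_zero_iff.1 hw).le
  have a := ptl_int hm hA hs i0 hw'
  have b := ptl_int hm hA hs (i1 n) hw'
  have c := (ptl_int hm hA hs (i0.sub (i1 n)) hw').2
  rw [dist_eq_norm, ← integral_sub a.1 b.1]
  refine lt_of_le_of_lt ?_ hn
  refine le_trans (le_of_eq ?_) c
  congr 2
  funext y
  simp [smul_sub]

/-- regularised norm -/
def sR (ε : ℝ) (u : E5) : ℝ := Real.sqrt (‖u‖^2 + ε)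
def KR (ε : ℝ) (u : E5) : ℝ := (sR ε u ^ 3)⁻¹
def DR (ε : ℝ) (u : E5) : E5 →L[ℝ] ℝ := (-3 * (sR ε u ^ 5)⁻¹) • innerSL ℝ u

theorem sR_cont (ε : ℝ) : Continuous (sR ε) := by unfold sR; fun_prop
theorem sR_zero (u : E5) : sR 0 u = ‖u‖ := by simp [sR]
theorem sR_ge {ε : ℝ} (h : 0 ≤ ε) (u : E5) : ‖u‖ ≤ sR ε u := by
  rw [← sR_zero]; exact Real.sqrt_le_sqrt (by linarith)
theorem sR_sq {ε : ℝ} (h : 0 ≤ ε) (u : E5) : sR ε u ^ 2 = ‖u‖^2 + ε :=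
  Real.sq_sqrt (by positivity)
theorem sR_pos {ε : ℝ} (h : 0 < ε) (u : E5) : 0 < sR ε u := Real.sqrt_pos.2 (by positivity)

theorem KR_hasFDerivAt {ε : ℝ} (h : 0 < ε) (u : E5) : HasFDerivAt (KR ε) (DR ε u) u := by
  have hp := sR_pos h u
  have h1 : HasFDerivAt (fun u : E5 => ‖u‖^2 + ε) (2 • innerSL ℝ u) u :=
    (hasStrictFDerivAt_norm_sq u).hasFDerivAt.add_const ε
  have h2 := h1.sqrt (by positivity)
  have h3 := (hasDerivAt_inv (pow_ne_zero 3 hp.ne')).comp_hasFDerivAt u (h2.pow 3)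
  refine h3.congr_fderiv ?_
  ext v
  simp only [DR]
  have : Real.sqrt (‖u‖^2 + ε) = sR ε u := rfl
  simp [this]
  field_simp

theorem KR_meas (ε : ℝ) : StronglyMeasurable (KR ε) := by
  have := (sR_cont ε).measurable
  unfold KR
  exact (this.pow_const 3).inv.stronglyMeasurable
theorem DR_meas (ε : ℝ) : StronglyMeasurable (DR ε) := by
  have := (sR_cont ε).measurable
  unfold DR
  exact (((this.pow_const 5).inv.const_mul (-3)).stronglyMeasurable).smul
    (innerSL ℝ).continuous.stronglyMeasurable

theorem KR_bd {ε : ℝ} (h : 0 ≤ ε) {u : E5} (hu : u ≠ 0) : ‖KR ε u‖ ≤ (‖u‖^3)⁻¹ := by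
  have h1 : 0 < ‖u‖ := norm_pos_iff.2 hu
  have h2 := sR_ge h u
  have h3 : 0 ≤ sR ε u := Real.sqrt_nonneg _
  rw [KR, Real.norm_of_nonneg (by positivity)]
  gcongr
theorem DR_norm {ε : ℝ} (u : E5) : ‖DR ε u‖ = 3 * (sR ε u ^5)⁻¹ * ‖u‖ := by
  have : 0 ≤ sR ε u := Real.sqrt_nonneg _
  rw [DR, norm_smul, innerSL_apply_norm, norm_mul, Real.norm_of_nonneg (r := (sR ε u ^5)⁻¹) (by positivity)]
  norm_num
theorem DR_bd {ε : ℝ} (h : 0 ≤ ε) {u : E5} (hu : u ≠ 0) : ‖DR ε u‖ ≤ 3 * (‖u‖^4)⁻¹ := by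
  have h1 : 0 < ‖u‖ := norm_pos_iff.2 hu
  have h2 := sR_ge h u
  rw [DR_norm]
  calc 3 * (sR ε u ^5)⁻¹ * ‖u‖ ≤ 3 * (‖u‖ ^5)⁻¹ * ‖u‖ := by gcongr
    _ = _ := by field_simp
theorem DR_bd2 {ε : ℝ} (h : 0 < ε) (u : E5) : ‖DR ε u‖ ≤ 3 * (ε^2)⁻¹ := by
  have h2 := sR_ge h.le u
  have hp := sR_pos h u
  rw [DR_norm]
  calc 3 * (sR ε u ^5)⁻¹ * ‖u‖ ≤ 3 * (sR ε u ^5)⁻¹ * sR ε u := by gcongr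
    _ = 3 * ((sR ε u ^2)^2)⁻¹ := by field_simp
    _ ≤ _ := by rw [sR_sq h.le]; gcongr; nlinarith [norm_nonneg u]

theorem sR_tendsto (u : E5) : Tendsto (fun n : ℕ => sR (1/((n:ℝ)+1)) u) atTop (nhds ‖u‖) := by
  rw [← sR_zero]
  unfold sR
  exact (tendsto_one_div_add_atTop_nhds_zero_nat.const_add _).sqrt

theorem int_norm4 (R : ℝ) : IntegrableOn (fun u : E5 => (‖u‖^4)⁻¹) (closedBall 0 R) := by
  have key : Integrable (fun u : E5 => (indicator (Iic R) (fun t : ℝ => (t^4)⁻¹)) ‖u‖) := by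
    rw [integrable_fun_norm_addHaar]
    have : IntegrableOn (indicator (Iic R) (fun _ : ℝ => (1:ℝ))) (Ioi 0) := by
      rw [integrableOn_indicator_iff measurableSet_Iic]
      refine (integrableOn_const (by simp) : IntegrableOn _ (Icc 0 R) _).mono_set ?_
      rintro x ⟨h1, h2⟩
      exact ⟨h2.le, h1⟩
    refine this.congr_fun (fun t ht => ?_) measurableSet_Ioi
    have ht' : (t:ℝ) ≠ 0 := (mem_Ioi.1 ht).ne'
    by_cases h : t ∈ Iic R
    · simp [indicator_of_mem h, ht']
    · simp [indicator_of_notMem h]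
  rw [← integrable_indicator_iff measurableSet_closedBall]
  refine key.congr (Eventually.of_forall fun u => ?_)
  by_cases h : ‖u‖ ≤ R <;> simp [indicator, h]

theorem int_norm3 (R : ℝ) : IntegrableOn (fun u : E5 => (‖u‖^3)⁻¹) (closedBall 0 R) := by
  refine ((int_norm4 R).const_mul R).mono' ?_ ?_
  · exact ((measurable_norm.pow_const 3).inv).aestronglyMeasurable
  · filter_upwards [ae_restrict_mem measurableSet_closedBall,
      ae_restrict_of_ae (s := closedBall (0:E5) R) (show ∀ᵐ u : E5, u ≠ 0 by simp [ae_iff])] with u hu hu0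
    have h1 : 0 < ‖u‖ := norm_pos_iff.2 hu0
    rw [Real.norm_of_nonneg (by positivity)]
    calc (‖u‖^3)⁻¹ = ‖u‖ * (‖u‖^4)⁻¹ := by field_simp
      _ ≤ _ := by gcongr; exact mem_closedBall_zero_iff.1 hu

theorem potential_fderiv {H : E5 → ℝ} {A : ℝ} (hm : AEStronglyMeasurable H volume)
    (hA : ∀ y, |H y| ≤ A) (hs : ∀ y, 2 < ‖y‖ → H y = 0) :
    (∀ w, HasFDerivAt (fun w => ∫ y, H y • KR 0 (w - y)) (∫ y, H y • DR 0 (w - y)) w) ∧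
    Continuous (fun w => ∫ y, H y • DR 0 (w - y)) := by
  have hH : Integrable H := by
    have : IntegrableOn H (closedBall 0 2) := by
      refine IntegrableOn.of_bound measure_closedBall_lt_top hm.restrict A (Eventually.of_forall hA)
    refine (integrableOn_iff_integrable_of_support_subset ?_).1 this
    intro y hy
    by_contra h
    exact hy (hs y (by simpa using h))
  have hε : ∀ n : ℕ, (0:ℝ) < 1/((n:ℝ)+1) := fun n => by positivity
  have K0 : ∀ u : E5, KR 0 u = (‖u‖^3)⁻¹ := fun u => by simp [KR, sR_zero]
  have contDR : ∀ n : ℕ, Continuous (DR (1/((n:ℝ)+1))) := fun n => by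
    unfold DR
    refine Continuous.smul (continuous_const.mul (((sR_cont _).pow 5).inv₀ fun u => ?_))
      (innerSL ℝ).continuous
    exact (pow_pos (sR_pos (hε n) u) 5).ne'
  have contKR : ∀ n : ℕ, Continuous (KR (1/((n:ℝ)+1))) := fun n =>
    continuous_iff_continuousAt.2 fun u => (KR_hasFDerivAt (hε n) u).continuousAt
  have d1 : ∀ (n : ℕ) w, HasFDerivAt (fun w => ∫ y, H y • KR (1/((n:ℝ)+1)) (w - y))
      (∫ y, H y • DR (1/((n:ℝ)+1)) (w - y)) w := by
    intro n w
    refine hasFDerivAt_integral_of_dominated_of_fderiv_le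
      (F := fun w y => H y • KR (1/((n:ℝ)+1)) (w - y))
      (F' := fun w y => H y • DR (1/((n:ℝ)+1)) (w - y))
      (bound := fun y => |H y| * (3 * ((1/((n:ℝ)+1))^2)⁻¹)) (univ_mem) ?_ ?_ ?_ ?_ ?_ ?_
    · exact Eventually.of_forall fun w => hm.smul
        ((contKR n).comp (continuous_const.sub continuous_id)).aestronglyMeasurable
    · exact (ptl_int (R := ‖w‖) hm hA hs
        ((contKR n).continuousOn.integrableOn_compact (isCompact_closedBall _ _)) le_rfl).1
    · exact hm.smul
        ((contDR n).comp (continuous_const.sub continuous_id)).aestronglyMeasurable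
    · refine Eventually.of_forall fun y w _ => ?_
      rw [norm_smul]
      exact mul_le_mul_of_nonneg_left (DR_bd2 (hε n) _) (norm_nonneg _)
    · exact hH.abs.mul_const _
    · refine Eventually.of_forall fun y w _ => ?_
      have := (KR_hasFDerivAt (hε n) (w - y)).comp w ((hasFDerivAt_id w).sub_const y)
      exact this.const_smul (H y)
  have c1 : ∀ n : ℕ, Continuous (fun w => ∫ y, H y • DR (1/((n:ℝ)+1)) (w - y)) := by
    intro n
    refine continuous_of_dominated (bound := fun y => |H y| * (3 * ((1/((n:ℝ)+1))^2)⁻¹))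
      ?_ ?_ ?_ ?_
    · exact fun w => hm.smul
        ((contDR n).comp (continuous_const.sub continuous_id)).aestronglyMeasurable
    · refine fun w => Eventually.of_forall fun y => ?_
      rw [norm_smul]
      exact mul_le_mul_of_nonneg_left (DR_bd2 (hε n) _) (norm_nonneg _)
    · exact hH.abs.mul_const _
    · exact Eventually.of_forall fun y =>
        ((contDR n).comp (continuous_id.sub (continuous_const (y := y)))).const_smul (H y)
  have uK : ∀ R : ℝ, TendstoUniformlyOn (fun (n:ℕ) w => ∫ y, H y • KR (1/((n:ℝ)+1)) (w - y))
      (fun w => ∫ y, H y • KR 0 (w - y)) atTop (ball 0 R) := fun R => by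
    refine ptl_unif (B := fun u => (‖u‖^3)⁻¹) hm hA hs (int_norm3 _) (fun n => KR_meas _) (KR_meas 0)
      (fun n u hu => KR_bd (hε n).le hu) (fun u hu => KR_bd le_rfl hu) (fun u hu => ?_)
    rw [K0]
    exact ((sR_tendsto u).pow 3).inv₀ (pow_ne_zero _ (norm_ne_zero_iff.2 hu))
  have uD : ∀ R : ℝ, TendstoUniformlyOn (fun (n:ℕ) w => ∫ y, H y • DR (1/((n:ℝ)+1)) (w - y))
      (fun w => ∫ y, H y • DR 0 (w - y)) atTop (ball 0 R) := fun R => by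
    refine ptl_unif (B := fun u => 3 * (‖u‖^4)⁻¹) hm hA hs ((int_norm4 _).const_mul 3)
      (fun n => DR_meas _) (DR_meas 0)
      (fun n u hu => DR_bd (hε n).le hu) (fun u hu => DR_bd le_rfl hu) (fun u hu => ?_)
    unfold DR
    rw [sR_zero]
    exact ((((sR_tendsto u).pow 5).inv₀ (pow_ne_zero _ (norm_ne_zero_iff.2 hu))).const_mul
      (-3)).smul_const _
  have inb : ∀ w : E5, w ∈ ball (0:E5) (‖w‖+1) := fun w => by simp
  constructor
  · intro w
    exact hasFDerivAt_of_tendstoUniformlyOn isOpen_ball (uD (‖w‖+1))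
      (fun n w _ => d1 n w) (fun w' hw => (uK (‖w‖+1)).tendsto_at hw) (inb w)
  · refine continuous_iff_continuousAt.2 fun w => ?_
    exact ((uD (‖w‖+1)).continuousOn (Eventually.of_forall fun n => (c1 n).continuousOn).frequently).continuousAt
      (isOpen_ball.mem_nhds (inb w))

theorem potential_bd {H : E5 → ℝ} {A : ℝ}
    (hA : ∀ y, |H y| ≤ A) (hs : ∀ y, 2 < ‖y‖ → H y = 0) :
    ContDiff ℝ 1 (fun w : E5 => ∫ y, (‖w - y‖^3)⁻¹ * H y) ∧
    (∀ w : E5, ‖w‖ ≤ 2 → |∫ y, (‖w - y‖^3)⁻¹ * H y| ≤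
      A * ∫ u in closedBall (0:E5) (2+2), ‖KR 0 u‖) ∧
    (∀ w : E5, ‖w‖ ≤ 2 → ‖fderiv ℝ (fun w : E5 => ∫ y, (‖w - y‖^3)⁻¹ * H y) w‖ ≤
      A * ∫ u in closedBall (0:E5) (2+2), ‖DR 0 u‖) := by
  have hA0 : 0 ≤ A := (abs_nonneg _).trans (hA 0)
  have e : (fun w : E5 => ∫ y, (‖w - y‖^3)⁻¹ * H y) = fun w => ∫ y, H y • KR 0 (w - y) := by
    funext w
    congr 1
    funext y
    simp [KR, sR_zero, mul_comm]
  by_cases hm : AEStronglyMeasurable H volume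
  · obtain ⟨h1, h2⟩ := potential_fderiv hm hA hs
    have ae0 : ∀ᵐ u : E5 ∂(volume.restrict (closedBall (0:E5) (2+2))), u ≠ 0 :=
      ae_restrict_of_ae (by simp [ae_iff])
    have iK : IntegrableOn (KR 0) (closedBall 0 (2+2)) :=
      (int_norm3 _).mono' (KR_meas 0).aestronglyMeasurable
        (ae0.mono fun u hu => KR_bd le_rfl hu)
    have iD : IntegrableOn (DR 0) (closedBall 0 (2+2)) :=
      ((int_norm4 _).const_mul 3).mono' (DR_meas 0).aestronglyMeasurable
        (ae0.mono fun u hu => DR_bd le_rfl hu)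
    have fd : fderiv ℝ (fun w => ∫ y, H y • KR 0 (w - y)) = fun w => ∫ y, H y • DR 0 (w - y) :=
      funext fun w => (h1 w).fderiv
    refine ⟨?_, ?_, ?_⟩
    · rw [e, contDiff_one_iff_fderiv, fd]
      exact ⟨fun w => (h1 w).differentiableAt, h2⟩
    · intro w hw
      rw [congrFun e w]
      exact (ptl_int hm hA hs iK hw).2
    · intro w hw
      rw [e, fd]
      exact (ptl_int hm hA hs iD hw).2
  · have z : (fun w : E5 => ∫ y, (‖w - y‖^3)⁻¹ * H y) = fun w => 0 := by
      funext w
      apply integral_undef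
      intro hi
      apply hm
      have m1 : AEStronglyMeasurable (fun y : E5 => ‖w - y‖^3) volume :=
        (by fun_prop : Continuous (fun y : E5 => ‖w - y‖^3)).aestronglyMeasurable
      refine (m1.mul hi.aestronglyMeasurable).congr ?_
      have : ∀ᵐ y : E5, y ≠ w := by simp [ae_iff]
      filter_upwards [this] with y hy
      have : ‖w - y‖ ≠ 0 := norm_ne_zero_iff.2 (sub_ne_zero.2 hy.symm)
      simp only [Pi.mul_apply]
      field_simp
    have z' : ∀ w : E5, ∫ y, (‖w - y‖^3)⁻¹ * H y = 0 := congrFun z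
    refine ⟨by rw [z]; exact contDiff_const, fun w _ => ?_, fun w _ => ?_⟩
    · rw [z', abs_zero]
      exact mul_nonneg hA0 (integral_nonneg fun u => norm_nonneg _)
    · rw [z]
      simp only [fderiv_fun_const, Pi.zero_apply, norm_zero]
      exact mul_nonneg hA0 (integral_nonneg fun u => norm_nonneg _)

/-- the R^5 version of `L⁻¹` -/
theorem G5_bd {C₅ : ℝ} (hC : 0 < C₅) {A : ℝ} (hA0 : 0 ≤ A) : ∃ C : ℝ, 0 < C ∧
    ∀ H : E5 → ℝ, (∀ y, |H y| ≤ A) → (∀ y, 2 < ‖y‖ → H y = 0) →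
    ContDiff ℝ 1 (fun w : E5 => C₅ * ((w 0)^2+(w 1)^2) * ∫ y, (‖w - y‖^3)⁻¹ * H y) ∧
    (∀ w : E5, ‖w‖ ≤ 2 →
      ‖fderiv ℝ (fun w : E5 => C₅ * ((w 0)^2+(w 1)^2) * ∫ y, (‖w - y‖^3)⁻¹ * H y) w‖ ≤
      C * ‖w‖) := by
  set a := A * ∫ u in closedBall (0:E5) (2+2), ‖KR 0 u‖ with ha
  set b := A * ∫ u in closedBall (0:E5) (2+2), ‖DR 0 u‖ with hb
  have ha0 : 0 ≤ a := mul_nonneg hA0 (integral_nonneg fun u => norm_nonneg _)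
  have hb0 : 0 ≤ b := mul_nonneg hA0 (integral_nonneg fun u => norm_nonneg _)
  refine ⟨C₅ * (4 * b + 4 * a) + 1, by positivity, fun H hA hs => ?_⟩
  obtain ⟨h1, h2, h3⟩ := potential_bd hA hs
  set U := (fun w : E5 => ∫ y, (‖w - y‖^3)⁻¹ * H y) with hU
  have hq : ContDiff ℝ 1 (fun w : E5 => C₅ * ((w 0)^2+(w 1)^2)) := by fun_prop
  refine ⟨hq.mul h1, fun w hw => ?_⟩
  let p0 : E5 →L[ℝ] ℝ := EuclideanSpace.proj 0
  let p1 : E5 →L[ℝ] ℝ := EuclideanSpace.proj 1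
  have np : ∀ (i : Fin 5) (v : E5), |v i| ≤ ‖v‖ := fun i v => PiLp.norm_apply_le v i
  have hp0 : ‖p0‖ ≤ 1 := p0.opNorm_le_bound zero_le_one fun v => by simpa [p0] using np 0 v
  have hp1 : ‖p1‖ ≤ 1 := p1.opNorm_le_bound zero_le_one fun v => by simpa [p1] using np 1 v
  have d0 : HasFDerivAt (fun w : E5 => C₅ * ((w 0)^2+(w 1)^2))
      (C₅ • ((2 * w 0) • p0 + (2 * w 1) • p1)) w := by
    have e0 : HasFDerivAt (fun w : E5 => w 0) p0 w := p0.hasFDerivAt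
    have e1 : HasFDerivAt (fun w : E5 => w 1) p1 w := p1.hasFDerivAt
    refine (((e0.pow 2).add (e1.pow 2)).const_mul C₅).congr_fderiv ?_
    ext v
    simp
  have d1 : HasFDerivAt U (fderiv ℝ U w) w :=
    ((h1.differentiable (by norm_num)) w).hasFDerivAt
  have d2 := (d0.mul d1).fderiv
  have e : (fun w : E5 => C₅ * ((w 0)^2+(w 1)^2) * ∫ y, (‖w - y‖^3)⁻¹ * H y) =
    (fun w : E5 => C₅ * ((w 0)^2+(w 1)^2)) * U := rfl
  rw [e, d2]
  have i0 := np 0 w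
  have i1 := np 1 w
  have nq : (w 0)^2 + (w 1)^2 ≤ ‖w‖^2 := by
    rw [EuclideanSpace.norm_sq_eq]
    simp [Fin.sum_univ_five]
    nlinarith [sq_nonneg (w 2), sq_nonneg (w 3), sq_nonneg (w 4)]
  have nd : ‖C₅ • ((2 * w 0) • p0 + (2 * w 1) • p1)‖ ≤ C₅ * (4 * ‖w‖) := by
    rw [norm_smul, Real.norm_of_nonneg hC.le]
    gcongr
    calc _ ≤ ‖(2 * w 0) • p0‖ + ‖(2 * w 1) • p1‖ := norm_add_le _ _
      _ = 2 * |w 0| * ‖p0‖ + 2 * |w 1| * ‖p1‖ := by simp [norm_smul]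
      _ ≤ 2 * ‖w‖ * 1 + 2 * ‖w‖ * 1 := by gcongr
      _ = _ := by ring
  have n3 : ‖U w‖ ≤ a := h2 w hw
  have n4 := h3 w hw
  calc _ ≤ ‖(C₅ * ((w 0)^2+(w 1)^2)) • fderiv ℝ U w‖
        + ‖U w • (C₅ • ((2 * w 0) • p0 + (2 * w 1) • p1))‖ := norm_add_le _ _
    _ = (C₅ * ((w 0)^2+(w 1)^2)) * ‖fderiv ℝ U w‖
        + ‖U w‖ * ‖C₅ • ((2 * w 0) • p0 + (2 * w 1) • p1)‖ := by
          rw [norm_smul, norm_smul (U w), Real.norm_of_nonneg (by positivity)]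
    _ ≤ (C₅ * ‖w‖^2) * b + a * (C₅ * (4 * ‖w‖)) := by gcongr
    _ ≤ (C₅ * (2 * ‖w‖)) * b + a * (C₅ * (4 * ‖w‖)) := by
        gcongr; nlinarith [norm_nonneg w]
    _ ≤ _ := by
        have : 0 ≤ C₅ * ‖w‖ * b := by positivity
        nlinarith [norm_nonneg w]

theorem comp_bd {G : E5 → ℝ} {C : ℝ} (hC : 0 ≤ C) (hG : ContDiff ℝ 1 G)
    (hG0 : G 0 = 0)
    (hb : ∀ w, ‖w‖ ≤ 2 → ‖fderiv ℝ G w‖ ≤ C * ‖w‖) {e : E3 → E5} (he0 : e 0 = 0)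
    (hl : LipschitzWith (3/2) e) (hd : ∀ x, x ≠ 0 → ContDiffAt ℝ 1 e x) :
    ContDiff ℝ 1 (fun x => G (e x)) ∧
    ∀ x, ‖x‖ ≤ 1 → ‖fderiv ℝ (fun x => G (e x)) x‖ ≤ C * (9/4) * ‖x‖ := by
  have nl : ∀ x, ‖e x‖ ≤ 3/2 * ‖x‖ := fun x => by
    have := hl.dist_le_mul x 0
    simpa [he0] using this
  have hGd : Differentiable ℝ G := hG.differentiable (by norm_num)
  have D0 : HasFDerivAt (fun x => G (e x)) (0 : E3 →L[ℝ] ℝ) 0 := by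
    have g0 : fderiv ℝ G 0 = 0 := by
      have := hb 0 (by simp)
      simpa using this
    have h1 : HasFDerivAt G (0 : E5 →L[ℝ] ℝ) 0 := g0 ▸ (hGd 0).hasFDerivAt
    rw [hasFDerivAt_iff_isLittleO_nhds_zero] at h1 ⊢
    simp only [zero_add, hG0, he0, sub_zero, _root_.zero_apply] at h1 ⊢
    have t : Tendsto e (nhds 0) (nhds 0) := by
      have := hl.continuous.tendsto 0
      rwa [he0] at this
    refine (h1.comp_tendsto t).trans_isBigO ?_
    exact Asymptotics.IsBigO.of_bound (3/2) (Eventually.of_forall nl)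
  have bd : ∀ x, ‖x‖ ≤ 1 → ‖fderiv ℝ (fun x => G (e x)) x‖ ≤ C * (9/4) * ‖x‖ := by
    intro x hx
    by_cases h0 : x = 0
    · subst h0
      rw [D0.fderiv]; simp
    have hde : DifferentiableAt ℝ e x := (hd x h0).differentiableAt (by norm_num)
    have : fderiv ℝ (fun x => G (e x)) x = (fderiv ℝ G (e x)).comp (fderiv ℝ e x) :=
      fderiv_comp x (hGd _) hde
    rw [this]
    have n1 := nl x
    have n2 : ‖fderiv ℝ e x‖ ≤ 3/2 := by
      have := norm_fderiv_le_of_lipschitz ℝ hl (x₀ := x)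
      simpa using this
    have n3 := hb (e x) (by linarith)
    calc _ ≤ ‖fderiv ℝ G (e x)‖ * ‖fderiv ℝ e x‖ := ContinuousLinearMap.opNorm_comp_le _ _
      _ ≤ (C * (3/2 * ‖x‖)) * (3/2) := by
        gcongr
        exact n3.trans (by gcongr)
      _ = _ := by ring
  refine ⟨?_, bd⟩
  have ca : ∀ x, x ≠ 0 → ContDiffAt ℝ 1 (fun x => G (e x)) x := fun x hx =>
    hG.contDiffAt.comp x (hd x hx)
  rw [contDiff_one_iff_fderiv]
  refine ⟨fun x => ?_, continuous_iff_continuousAt.2 fun x => ?_⟩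
  · by_cases h0 : x = 0
    · subst h0; exact D0.differentiableAt
    · exact (ca x h0).differentiableAt (by norm_num)
  · by_cases h0 : x = 0
    · subst h0
      rw [ContinuousAt, D0.fderiv, tendsto_zero_iff_norm_tendsto_zero]
      have t : Tendsto (fun x : E3 => C * (9/4) * ‖x‖) (nhds 0) (nhds 0) := by
        have : Continuous (fun x : E3 => C * (9/4) * ‖x‖) := by fun_prop
        simpa using this.tendsto 0
      refine tendsto_of_tendsto_of_tendsto_of_le_of_le' tendsto_const_nhds t
        (Eventually.of_forall fun x => norm_nonneg _) ?_
      filter_upwards [closedBall_mem_nhds (0:E3) one_pos] with x hx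
      exact bd x (by simpa using hx)
    · exact (ca x h0).continuousAt_fderiv (by norm_num)

theorem zeta_lip {δ : ℝ} (hδ : 0 ≤ δ) {ζ : E3 → ℝ} (h : InXext δ ζ) {x y : E3}
    (hxy : ‖y‖ ≤ ‖x‖) : |ζ x - ζ y| ≤ δ * ‖x‖ * ‖x - y‖ := by
  obtain ⟨h1, -, -, -, h5⟩ := h
  have := (convex_closedBall (0:E3) ‖x‖).norm_image_sub_le_of_norm_fderiv_le (𝕜 := ℝ) (f := ζ)
    (C := δ * ‖x‖) (x := y) (y := x) (fun z _ => (h1.differentiable (by norm_num)) z)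
    (fun z hz => (h5 z).trans (by gcongr; simpa using hz)) (by simpa using hxy) (by simp)
  simpa using this

theorem zeta_bd {δ : ℝ} (hδ : 0 ≤ δ) {ζ : E3 → ℝ} (h : InXext δ ζ) (x : E3) :
    |ζ x| ≤ δ * ‖x‖ ^ 2 := by
  have := zeta_lip hδ h (x := x) (y := 0) (by simp)
  rw [h.2.2.2.1] at this
  simp only [sub_zero] at this
  nlinarith

def psi (ζ : E3 → ℝ) (x : E3) : E3 := (ζ x / ‖x‖^2) • x

theorem gdef_eq (ζ : E3 → ℝ) (x : E3) : gdef ζ x = x + psi ζ x := by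
  simp [gdef, psi, add_smul]

theorem psi_lip_aux {δ : ℝ} (hδ : 0 ≤ δ) {ζ : E3 → ℝ} (h : InXext δ ζ) {x y : E3}
    (hxy : ‖y‖ ≤ ‖x‖) : ‖psi ζ x - psi ζ y‖ ≤ 2 * δ * ‖x - y‖ := by
  by_cases hx : x = 0
  · subst hx
    have : y = 0 := by simpa using hxy
    subst this
    simp
  have px : 0 < ‖x‖ := norm_pos_iff.2 hx
  by_cases hy : y = 0
  · subst hy
    have hb := zeta_bd hδ h x
    simp only [psi, smul_zero, sub_zero, norm_smul, norm_div, norm_pow, Real.norm_eq_abs, abs_norm]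
    have : |ζ x| / ‖x‖^2 ≤ δ := by rw [div_le_iff₀ (by positivity)]; exact hb
    rw [mul_comm 2 δ]
    nlinarith [mul_le_mul_of_nonneg_right this px.le, mul_nonneg hδ px.le]
  have py : 0 < ‖y‖ := norm_pos_iff.2 hy
  have hb := zeta_bd hδ h y
  have hl := zeta_lip hδ h hxy
  have hd := dist_div_norm_sq_smul hx hy 1
  rw [dist_eq_norm, dist_eq_norm] at hd
  have e : psi ζ x - psi ζ y = (ζ x - ζ y) • ((1/‖x‖)^2 • x)
      + ζ y • ((1/‖x‖)^2 • x - (1/‖y‖)^2 • y) := by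
    simp only [psi]
    module
  rw [e]
  have n1 : ‖(1/‖x‖)^2 • x‖ = 1/‖x‖ := by
    rw [norm_smul, Real.norm_of_nonneg (by positivity)]
    field_simp
  calc _ ≤ ‖(ζ x - ζ y) • ((1/‖x‖)^2 • x)‖
      + ‖ζ y • ((1/‖x‖)^2 • x - (1/‖y‖)^2 • y)‖ := norm_add_le _ _
    _ = |ζ x - ζ y| * (1/‖x‖) + |ζ y| * (1^2/(‖x‖*‖y‖) * ‖x - y‖) := by
      rw [norm_smul (ζ x - ζ y), norm_smul (ζ y), n1, hd]; rfl
    _ ≤ (δ * ‖x‖ * ‖x - y‖) * (1/‖x‖) + (δ * ‖y‖ ^ 2) * (1^2/(‖x‖*‖y‖) * ‖x - y‖) := by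
      gcongr
    _ = δ * ‖x - y‖ + δ * ‖x - y‖ * (‖y‖ / ‖x‖) := by field_simp
    _ ≤ δ * ‖x - y‖ + δ * ‖x - y‖ * 1 := by
      gcongr
      exact (div_le_one px).2 hxy
    _ = _ := by ring

theorem psi_lip {ζ : E3 → ℝ} (h : InXext (1/4) ζ) : LipschitzWith (1/2) (psi ζ) := by
  refine LipschitzWith.of_dist_le_mul fun x y => ?_
  rw [dist_eq_norm, dist_eq_norm]
  have e : ((1/2 : NNReal) : ℝ) = 2 * (1/4) := by norm_num
  rw [e]
  rcases le_total ‖y‖ ‖x‖ with hxy | hxy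
  · exact psi_lip_aux (by norm_num) h hxy
  · rw [norm_sub_rev, norm_sub_rev x]
    exact psi_lip_aux (by norm_num) h hxy

theorem gdef_lip {ζ : E3 → ℝ} (h : InXext (1/4) ζ) : LipschitzWith (3/2) (gdef ζ) := by
  have e : gdef ζ = fun x => x + psi ζ x := funext (gdef_eq ζ)
  rw [e]
  have := LipschitzWith.id.add (psi_lip h)
  have e2 : (3/2 : NNReal) = 1 + 1/2 := by
    rw [← NNReal.coe_inj]; norm_num
  rw [e2]
  exact this

theorem gdef_inj {ζ : E3 → ℝ} (h : InXext (1/4) ζ) : Function.Injective (gdef ζ) := by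
  intro x y hxy
  rw [gdef_eq, gdef_eq] at hxy
  have h1 := (psi_lip h).dist_le_mul x y
  rw [dist_eq_norm, dist_eq_norm] at h1
  have h2 : psi ζ x - psi ζ y = y - x := by
    rw [sub_eq_sub_iff_add_eq_add, add_comm, hxy, add_comm]
  rw [h2, norm_sub_rev] at h1
  norm_num at h1
  have : ‖x - y‖ = 0 := by nlinarith [norm_nonneg (x - y)]
  exact sub_eq_zero.1 (norm_eq_zero.1 this)

theorem gdef_surj {ζ : E3 → ℝ} (h : InXext (1/4) ζ) : Function.Surjective (gdef ζ) := by
  intro z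
  have hc : ContractingWith (1/2) (fun x => z - psi ζ x) := by
    refine ⟨by rw [← NNReal.coe_lt_coe]; norm_num, ?_⟩
    have := (LipschitzWith.const z).sub (psi_lip h)
    simpa using this
  refine ⟨hc.fixedPoint, ?_⟩
  have := hc.fixedPoint_isFixedPt
  rw [gdef_eq]
  exact eq_sub_iff_add_eq.1 this.eq.symm

theorem gdef_ginv {ζ : E3 → ℝ} (h : InXext (1/4) ζ) (z : E3) : gdef ζ (ginv ζ z) = z :=
  Function.invFun_eq (gdef_surj h z)

theorem gdef_zero (ζ : E3 → ℝ) : gdef ζ 0 = 0 := by simp [gdef]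

theorem gdef_norm {ζ : E3 → ℝ} (h : InXext (1/4) ζ) (x : E3) : ‖gdef ζ x‖ ≤ 3/2 * ‖x‖ := by
  have := (gdef_lip h).dist_le_mul x 0
  simpa [gdef_zero] using this

theorem gdef_smooth {ζ : E3 → ℝ} {δ : ℝ} (h : InXext δ ζ) {x : E3} (hx : x ≠ 0) :
    ContDiffAt ℝ 1 (gdef ζ) x := by
  unfold gdef
  refine ContDiffAt.smul (contDiffAt_const.add (h.1.contDiffAt.div
    (contDiff_norm_sq ℝ).contDiffAt ?_)) contDiffAt_id
  exact pow_ne_zero _ (norm_ne_zero_iff.2 hx)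

@[simp] theorem mk3_0 (a b c : ℝ) : mk3 a b c 0 = a := rfl
@[simp] theorem mk3_1 (a b c : ℝ) : mk3 a b c 1 = b := rfl
@[simp] theorem mk3_2 (a b c : ℝ) : mk3 a b c 2 = c := rfl
@[simp] theorem emb_0 (x : E3) : emb x 0 = x 0 := rfl
@[simp] theorem emb_1 (x : E3) : emb x 1 = x 1 := rfl
@[simp] theorem emb_2 (x : E3) : emb x 2 = 0 := rfl
@[simp] theorem emb_3 (x : E3) : emb x 3 = 0 := rfl
@[simp] theorem emb_4 (x : E3) : emb x 4 = x 2 := rfl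

theorem n3 (x : E3) : ‖x‖^2 = x 0 ^ 2 + x 1 ^2 + x 2 ^ 2 := by
  rw [EuclideanSpace.norm_sq_eq]; simp [Fin.sum_univ_three]
theorem n5 (x : E5) : ‖x‖^2 = x 0 ^ 2 + x 1 ^2 + x 2 ^ 2 + x 3 ^ 2 + x 4 ^ 2 := by
  rw [EuclideanSpace.norm_sq_eq]; simp [Fin.sum_univ_five]

theorem norm_emb (x : E3) : ‖emb x‖ = ‖x‖ := by
  rw [← sq_eq_sq₀ (norm_nonneg _) (norm_nonneg _), n3, n5]; simp

def embL : E3 →ₗ[ℝ] E5 where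
  toFun := emb
  map_add' x y := by ext i; fin_cases i <;> simp [emb, mk5]
  map_smul' x y := by ext i; fin_cases i <;> simp [emb, mk5]

def embI : E3 →ₗᵢ[ℝ] E5 := ⟨embL, norm_emb⟩
theorem embI_apply (x : E3) : embI x = emb x := rfl

theorem reflect_smul (c : ℝ) (x : E3) : reflect3 (c • x) = c • reflect3 x := by
  ext i; fin_cases i <;> simp [reflect3, mk3]
theorem reflect_norm (x : E3) : ‖reflect3 x‖ = ‖x‖ := by
  rw [← sq_eq_sq₀ (norm_nonneg _) (norm_nonneg _), n3, n3]; simp [reflect3]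

theorem gdef_reflect {ζ : E3 → ℝ} (h : EvenZ ζ) (x : E3) :
    gdef ζ (reflect3 x) = reflect3 (gdef ζ x) := by
  simp [gdef, reflect_smul, reflect_norm, h x]

theorem ginv_reflect {ζ : E3 → ℝ} (h : InXext (1/4) ζ) (z : E3) :
    ginv ζ (reflect3 z) = reflect3 (ginv ζ z) := by
  apply gdef_inj h
  rw [gdef_ginv h, gdef_reflect h.2.2.1, gdef_ginv h]

/-- cylindrical normal form -/
def cyl (x : E3) : E3 := mk3 (cylRad x) 0 (x 2)

theorem cylRad_cyl (x : E3) : cylRad (cyl x) = cylRad x := by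
  have : 0 ≤ cylRad x := Real.sqrt_nonneg _
  simp [cylRad, cyl]
theorem cylRad_sq (x : E3) : cylRad x ^ 2 = x 0 ^ 2 + x 1 ^2 := Real.sq_sqrt (by positivity)
theorem cyl_norm (x : E3) : ‖cyl x‖ = ‖x‖ := by
  rw [← sq_eq_sq₀ (norm_nonneg _) (norm_nonneg _), n3, n3]; simp [cyl, cylRad_sq]

theorem tilde_norm (y : E5) :
    ‖mk3 (Real.sqrt ((y 0)^2 + (y 1)^2 + (y 2)^2 + (y 3)^2)) 0 (y 4)‖ = ‖y‖ := by
  rw [← sq_eq_sq₀ (norm_nonneg _) (norm_nonneg _), n3, n5]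
  simp only [mk3_0, mk3_1, mk3_2]
  rw [Real.sq_sqrt (by positivity)]; ring

theorem tilde_congr (f : E3 → ℝ) {y y' : E5} (h : ‖y‖ = ‖y'‖) (h4 : y 4 = y' 4) :
    tilde f y = tilde f y' := by
  have := n5 y
  rw [h, n5 y', ← h4] at this
  unfold tilde
  rw [h4]
  congr 3
  linarith

theorem int_isom (R : E5 ≃ₗᵢ[ℝ] E5) (w : E5) (H : E5 → ℝ) (hH : ∀ y, H (R y) = H y) :
    ∫ y, (‖R w - y‖ ^ 3)⁻¹ * H y = ∫ y, (‖w - y‖ ^ 3)⁻¹ * H y := by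
  rw [← R.measurePreserving.integral_comp R.toHomeomorph.measurableEmbedding]
  congr 1
  funext y
  rw [hH, ← map_sub, R.norm_map]

theorem inner_e4 (y : E5) : inner ℝ y (EuclideanSpace.single 4 (1:ℝ)) = y 4 := by
  simp [EuclideanSpace.inner_single_right]

theorem reflection_inner_swap (K : Submodule ℝ E5) (y z : E5) :
    inner ℝ (K.reflection y) z = inner ℝ y (K.reflection z) := by
  rw [← K.reflection.inner_map_map y, Submodule.reflection_reflection]

theorem Linv_rot (C : ℝ) (f : E3 → ℝ) {a b : E3} (h : cylRad a = cylRad b) (h2 : a 2 = b 2) :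
    Linv C f a = Linv C f b := by
  have hr : a 0 ^ 2 + a 1 ^ 2 = b 0 ^ 2 + b 1 ^ 2 := by rw [← cylRad_sq, ← cylRad_sq, h]
  have hn : ‖emb a‖ = ‖emb b‖ := by
    rw [← sq_eq_sq₀ (norm_nonneg _) (norm_nonneg _), norm_emb, norm_emb, n3, n3, hr, h2]
  unfold Linv
  rw [hr]
  congr 1
  have hR := Submodule.reflection_sub hn
  rw [← hR]
  refine (int_isom _ _ _ fun y => ?_).symm
  refine tilde_congr f (LinearIsometryEquiv.norm_map _ _) ?_
  rw [← inner_e4, reflection_inner_swap, Submodule.reflection_mem_subspace_eq_self, inner_e4]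
  rw [Submodule.mem_orthogonal_singleton_iff_inner_right, inner_e4]
  simp [h2]

theorem Linv_reflect (C : ℝ) {f : E3 → ℝ} (hf : EvenZ f) (a : E3) :
    Linv C f (reflect3 a) = Linv C f a := by
  unfold Linv
  have hR : ∀ y : E5, Submodule.reflection (Submodule.span ℝ {EuclideanSpace.single 4 (1:ℝ)})ᗮ y
      = mk5 (y 0) (y 1) (y 2) (y 3) (-(y 4)) := by
    intro y
    rw [Submodule.reflection_orthogonal_apply, Submodule.reflection_singleton_apply]
    ext i
    fin_cases i <;> simp [mk5, EuclideanSpace.inner_single_left]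
    ring
  have e : emb (reflect3 a) =
      Submodule.reflection (Submodule.span ℝ {EuclideanSpace.single 4 (1:ℝ)})ᗮ (emb a) := by
    rw [hR]; rfl
  rw [e]
  congr 1
  refine int_isom _ _ _ fun y => ?_
  rw [hR]
  exact hf (mk3 (Real.sqrt ((y 0)^2 + (y 1)^2 + (y 2)^2 + (y 3)^2)) 0 (y 4))

theorem gdef_cyl {ζ : E3 → ℝ} (h : Axisym ζ) (x : E3) :
    cylRad (gdef ζ x) = cylRad (gdef ζ (cyl x)) ∧ (gdef ζ x) 2 = (gdef ζ (cyl x)) 2 := by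
  obtain ⟨F, hF⟩ := h
  have e : ζ (cyl x) = ζ x := by rw [hF, hF, cylRad_cyl]; rfl
  have hs := cylRad_sq x
  constructor
  · unfold cylRad
    congr 1
    simp only [gdef, e, cyl_norm, PiLp.smul_apply, smul_eq_mul, mul_pow, ← mul_add, ← hs]
    simp [cyl]
  · simp [gdef, e, cyl_norm]
    left
    rfl

/-- for δ sufficiently small, ζ, φ ∈ X_δ, ρ₀ bounded measurable
axisymmetric even in x₃ and supported in B̄₁, and k ∈ C²(ℝ), the function
F₃(ζ,φ)(x) = L⁻¹[(ρ₀∘g_ζ⁻¹)(k∘φ∘g_ζ⁻¹)](g_ζ(x)) belongs to X, with ‖F₃(ζ,φ)‖_X ≤ C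
for a constant C depending only on ‖ρ₀‖_{L∞}, k and δ. -/
theorem F3_maps_into_X :
    ∃ δ : ℝ, 0 < δ ∧
      ∀ C₅ : ℝ, 0 < C₅ →
        ∀ k : ℝ → ℝ, ContDiff ℝ 2 k →
          ∀ M : ℝ, 0 < M →
            ∃ C : ℝ, 0 < C ∧
              ∀ ρ₀ : E3 → ℝ, Measurable ρ₀ → (∀ x, |ρ₀ x| ≤ M) →
                Axisym ρ₀ → EvenZ ρ₀ → Function.support ρ₀ ⊆ closedBall (0:E3) 1 →
                ∀ ζ : E3 → ℝ, InXext δ ζ →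
                  ∀ φ : E3 → ℝ, InX φ → XnormLe φ δ →
                    InX (fun x => Linv C₅
                          (fun z => ρ₀ (ginv ζ z) * k (φ (ginv ζ z))) (gdef ζ x)) ∧
                    XnormLe (fun x => Linv C₅
                          (fun z => ρ₀ (ginv ζ z) * k (φ (ginv ζ z))) (gdef ζ x)) C := by
  refine ⟨1/4, by norm_num, fun C₅ hC₅ k hk M hM => ?_⟩
  obtain ⟨K, hK⟩ := (isCompact_Icc (a := (-1:ℝ)) (b := 1)).exists_bound_of_continuousOn
    hk.continuous.continuousOn
  have hK0 : 0 ≤ K := (norm_nonneg _).trans (hK 0 (by norm_num))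
  obtain ⟨C, hC, hG⟩ := G5_bd hC₅ (A := M * K) (by positivity)
  refine ⟨C * (9/4), by positivity, ?_⟩
  intro ρ₀ _ hρM _ hρe hρs ζ hζ φ hφ hφX
  set f : E3 → ℝ := fun z => ρ₀ (ginv ζ z) * k (φ (ginv ζ z)) with hf
  have hρ0 : ∀ x, 1 < ‖x‖ → ρ₀ x = 0 := fun x hx => by
    by_contra h
    have := hρs h
    rw [mem_closedBall_zero_iff] at this
    linarith
  have hφb : ∀ x, ‖x‖ ≤ 1 → |φ x| ≤ 1 := fun x hx => by
    have := (convex_closedBall (0:E3) 1).norm_image_sub_le_of_norm_fderivWithin_le (𝕜 := ℝ)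
      (f := φ) (C := 1/4) (x := 0) (y := x) (hφ.1.differentiableOn (by norm_num))
      (fun z hz => (hφX z hz).trans (by
        have : ‖z‖ ≤ 1 := by simpa using hz
        linarith)) (by simp) (by simpa using hx)
    rw [hφ.2.2.2.1] at this
    simp only [sub_zero, Real.norm_eq_abs] at this
    linarith
  have hfM : ∀ z, |f z| ≤ M * K := fun z => by
    by_cases h : ‖ginv ζ z‖ ≤ 1
    · rw [hf]
      simp only [abs_mul]
      exact mul_le_mul (hρM _) (hK _ (abs_le.1 (hφb _ h))) (abs_nonneg _) hM.le
    · simp only [hf, hρ0 _ (not_le.1 h), zero_mul, abs_zero]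
      positivity
  have hfs : ∀ z, 2 < ‖z‖ → f z = 0 := fun z hz => by
    have h1 := gdef_norm hζ (ginv ζ z)
    rw [gdef_ginv hζ] at h1
    simp only [hf, hρ0 _ (by linarith : 1 < ‖ginv ζ z‖), zero_mul]
  have hfe : EvenZ f := fun z => by
    simp only [hf, ginv_reflect hζ, hρe (ginv ζ z)]
    by_cases h : ‖ginv ζ z‖ ≤ 1
    · rw [hφ.2.2.1 _ (by simpa using h)]
    · simp [hρ0 _ (not_le.1 h)]
  obtain ⟨g1, g2⟩ := hG (tilde f) (fun y => hfM _)
    (fun y hy => hfs _ (by rw [tilde_norm]; exact hy))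
  have he0 : emb (gdef ζ 0) = 0 := by
    rw [gdef_zero, ← embI_apply, map_zero]
  have hl : LipschitzWith (3/2) (fun x => emb (gdef ζ x)) := by
    have := embI.lipschitz.comp (gdef_lip hζ)
    rw [one_mul] at this
    exact this
  have hd : ∀ x, x ≠ 0 → ContDiffAt ℝ 1 (fun x => emb (gdef ζ x)) x := fun x hx =>
    (embI.contDiff.contDiffAt).comp x (gdef_smooth hζ hx)
  obtain ⟨c1, c2⟩ := comp_bd hC.le g1 (by simp) g2 he0 hl hd
  have hX : XnormLe (fun x => Linv C₅ f (gdef ζ x)) (C * (9/4)) := fun x hx => by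
    have hu : UniqueDiffWithinAt ℝ (closedBall (0:E3) 1) x :=
      uniqueDiffOn_convex (convex_closedBall _ _)
        (by rw [interior_closedBall _ one_ne_zero]; exact ⟨0, by simp⟩) x hx
    have e : gradB (fun x => Linv C₅ f (gdef ζ x)) x =
        fderiv ℝ (fun x => Linv C₅ f (gdef ζ x)) x :=
      ((c1.differentiable (by norm_num)) x).fderivWithin hu
    rw [e]
    exact c2 x (by simpa using hx)
  refine ⟨⟨c1.contDiffOn, ⟨fun r z => Linv C₅ f (gdef ζ (mk3 r 0 z)), fun x _ => ?_⟩,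
    fun x _ => ?_, ?_, ⟨_, hX⟩⟩, hX⟩
  · exact Linv_rot C₅ f (gdef_cyl hζ.2.1 x).1 (gdef_cyl hζ.2.1 x).2
  · show Linv C₅ f (gdef ζ (reflect3 x)) = _
    rw [gdef_reflect hζ.2.2.1]
    exact Linv_reflect C₅ hfe _
  · show Linv C₅ f (gdef ζ 0) = 0
    rw [gdef_zero]
    simp [Linv]
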